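/- Let A(t) = ∑_{n≥0} A_n tⁿ be a formal power series with complex coefficients. There exists a formal power series u ∈ ℂ[[t]] with constant term u(0) = 1 satisfying the formal differential equation t·u″(t) − u′(t) + A(t)·u(t) = 0 if and only if A₀² + A₁ = 0. -/

import Mathlib

open PowerSeries

/-!
At order `tⁿ` the equation reads `(n + 1)(n - 1) uₙ₊₁ + (A u)ₙ = 0`, which determines `uₙ₊₁` except
at the resonance `n = 1`. There `u₂` drops out, and since order `t⁰` forces `u₁ = A₀ u₀`, what is
left is the constraint `(A₀² + A₁) u₀ = 0`. Setting `u₂ = 0` and solving the recurrence at all other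
orders produces, for every `A`, a series whose only residual is `(A₀² + A₁) t`.
-/

section CommRing

variable {R : Type*} [CommRing R]

/-- The operator `u ↦ t u″ - u′ + A u`, obtained from `∂² - 3 / (4 t²) + A / t` by substituting
`t ^ (-1/2) * u` for the unknown function and clearing the factor `t ^ (-3/2)`. -/
noncomputable def frobeniusOperator (A u : R⟦X⟧) : R⟦X⟧ :=
  X * derivative R (derivative R u) - derivative R u + A * u

theorem coeff_frobeniusOperator (A u : R⟦X⟧) (n : ℕ) :
    coeff n (frobeniusOperator A u) =
      ((n : R) + 1) * ((n : R) - 1) * coeff (n + 1) u + coeff n (A * u) := by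
  rw [frobeniusOperator, map_add, map_sub]
  congr 1
  cases n with
  | zero => simp [coeff_derivative]
  | succ m =>
    simp only [coeff_succ_X_mul, coeff_derivative]
    push_cast
    ring

/-- Eliminating `u₁` between the orders `t⁰` and `t¹` leaves no coefficient of `u` but `u₀`. -/
theorem coeff_one_frobeniusOperator_add (A u : R⟦X⟧) :
    coeff 1 (frobeniusOperator A u) + coeff 0 A * coeff 0 (frobeniusOperator A u) =
      ((coeff 0 A) ^ 2 + coeff 1 A) * constantCoeff u := by
  rw [← coeff_zero_eq_constantCoeff_apply u]
  simp only [coeff_frobeniusOperator, coeff_mul, Finset.Nat.sum_antidiagonal_succ,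
    Finset.Nat.antidiagonal_zero, Finset.sum_singleton]
  push_cast
  ring

end CommRing

section RatAlgebra

variable {R : Type*} [CommRing R] [Algebra ℚ R]

/-- The coefficients, normalised by `u₀ = 1`, that solve the Frobenius recurrence away from `n = 1`.
At `n = 1` the convention `0⁻¹ = 0` selects the value `0` for the free coefficient `u₂`. -/
noncomputable def frobeniusCoeff (A : R⟦X⟧) : ℕ → R
  | 0 => 1
  | n + 1 => -(((n : ℚ) + 1) * ((n : ℚ) - 1))⁻¹ •
      ∑ j : Fin (n + 1), frobeniusCoeff A j * coeff (n - j) A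

/-- The normalised candidate solution of `frobeniusOperator A u = 0`; it satisfies the equation at
every order other than `t¹`. -/
noncomputable def frobeniusSeries (A : R⟦X⟧) : R⟦X⟧ :=
  PowerSeries.mk (frobeniusCoeff A)

theorem constantCoeff_frobeniusSeries (A : R⟦X⟧) : constantCoeff (frobeniusSeries A) = 1 := by
  rw [frobeniusSeries, ← coeff_zero_eq_constantCoeff_apply, coeff_mk, frobeniusCoeff]

theorem coeff_succ_frobeniusSeries (A : R⟦X⟧) (n : ℕ) :
    coeff (n + 1) (frobeniusSeries A) =
      -(((n : ℚ) + 1) * ((n : ℚ) - 1))⁻¹ • coeff n (A * frobeniusSeries A) := by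
  rw [mul_comm A, coeff_mul, Finset.Nat.sum_antidiagonal_eq_sum_range_succ
    (fun i j ↦ coeff i (frobeniusSeries A) * coeff j A), Finset.sum_range]
  simp only [frobeniusSeries, coeff_mk]
  rw [frobeniusCoeff]

theorem coeff_frobeniusOperator_frobeniusSeries_of_ne_one (A : R⟦X⟧) {n : ℕ} (hn : n ≠ 1) :
    coeff n (frobeniusOperator A (frobeniusSeries A)) = 0 := by
  have indicial_ne_zero : ((n : ℚ) + 1) * ((n : ℚ) - 1) ≠ 0 :=
    mul_ne_zero n.cast_add_one_ne_zero (sub_ne_zero.mpr (Nat.cast_ne_one.mpr hn))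
  have indicial_cast : ((n : R) + 1) * ((n : R) - 1) =
      algebraMap ℚ R (((n : ℚ) + 1) * ((n : ℚ) - 1)) := by
    simp only [map_mul, map_add, map_sub, map_natCast, map_one]
  rw [coeff_frobeniusOperator, coeff_succ_frobeniusSeries, indicial_cast, ← Algebra.smul_def,
    neg_smul, smul_neg, smul_inv_smul₀ indicial_ne_zero, neg_add_cancel]

theorem frobeniusOperator_frobeniusSeries (A : R⟦X⟧) :
    frobeniusOperator A (frobeniusSeries A) = monomial 1 ((coeff 0 A) ^ 2 + coeff 1 A) := by
  ext n
  rw [coeff_monomial]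
  split_ifs with hn
  · subst hn
    simpa only [coeff_frobeniusOperator_frobeniusSeries_of_ne_one A zero_ne_one,
      constantCoeff_frobeniusSeries, mul_zero, add_zero, mul_one]
      using coeff_one_frobeniusOperator_add A (frobeniusSeries A)
  · exact coeff_frobeniusOperator_frobeniusSeries_of_ne_one A hn

theorem trivial_monodromy_three_quarters_general (A : R⟦X⟧) :
    (∃ u : R⟦X⟧, constantCoeff u = 1 ∧
        X * derivative R (derivative R u) - derivative R u + A * u = 0)
      ↔ (coeff 0 A) ^ 2 + coeff 1 A = 0 := by
  constructor
  · rintro ⟨u, hu₀, (hu : frobeniusOperator A u = 0)⟩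
    have obstruction := coeff_one_frobeniusOperator_add A u
    rw [hu, hu₀, map_zero, map_zero, mul_zero, add_zero, mul_one] at obstruction
    exact obstruction.symm
  · intro hA
    refine ⟨frobeniusSeries A, constantCoeff_frobeniusSeries A, ?_⟩
    change frobeniusOperator A (frobeniusSeries A) = 0
    rw [frobeniusOperator_frobeniusSeries, hA, map_zero]

end RatAlgebra

/-- Frobenius-series form of trivial monodromy for indicial exponents `3/2, -1/2`:
the formal ODE `t·u″ − u′ + A·u = 0` has a formal power series solution with `u(0) = 1`
iff `A₀² + A₁ = 0`. -/
theorem trivial_monodromy_three_quarters (A : PowerSeries ℂ) :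
    (∃ u : PowerSeries ℂ, constantCoeff u = 1 ∧
        X * derivative ℂ (derivative ℂ u) - derivative ℂ u + A * u = 0)
      ↔ (coeff 0 A) ^ 2 + coeff 1 A = 0 :=
  trivial_monodromy_three_quarters_general A
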